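/- Fix real k₁ > 0 and k₂ > 0, and set ρ = k₁ + 2k₂. For λ ≥ 0 and t ≥ 0 define I(λ, t) = ∫₀¹ ∫₀^π (cosh²t + 2 r cos φ sinh t cosh t + r² sinh²t)^((λ−ρ)/2) (1−r²)^(k₁−1) r^(2k₂) (sin φ)^(2k₂−1) dφ dr. Then for all λ ≥ 0 and t ≥ 0 with λ t ≤ 1, one has e^(−1) I(0, t) ≤ I(λ, t) ≤ e · I(0, t). -/

import Mathlib

open MeasureTheory Real

/-- Koornwinder's integral representation (up to a constant) of the
Heckman–Opdam hypergeometric function for the root system `BC₁`. -/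
noncomputable def bcIntegral (k₁ k₂ l t : ℝ) : ℝ :=
  ∫ r in (0:ℝ)..1, ∫ φ in (0:ℝ)..Real.pi,
    (Real.cosh t ^ 2 + 2 * r * Real.cos φ * Real.sinh t * Real.cosh t +
        r ^ 2 * Real.sinh t ^ 2) ^ ((l - (k₁ + 2 * k₂)) / 2) *
      (1 - r ^ 2) ^ (k₁ - 1) * r ^ (2 * k₂) * Real.sin φ ^ (2 * k₂ - 1)

/-!
The base of the power in the integrand is `‖cosh t + z sinh t‖ ^ 2` for `z = r * exp (φ * I)`, so
for `‖z‖ ≤ 1` the triangle inequality puts it between `exp (-2 * |t|)` and `exp (2 * |t|)`. Changing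
the spectral parameter from `m` to `l` therefore changes the integrand by a factor of at most
`exp (|l - m| * |t|)`. For `k₁, k₂ > 0` the weight is integrable, and integrating this pointwise
comparison compares the integrals.
-/

theorem rpow_le_exp_abs_mul_rpow {x : ℝ} (hx : 0 < x) (a b : ℝ) :
    x ^ a ≤ exp (|a - b| * |log x|) * x ^ b := by
  rw [rpow_def_of_pos hx, rpow_def_of_pos hx, ← exp_add, exp_le_exp, ← abs_mul]
  linarith [le_abs_self ((a - b) * log x)]

section HyperbolicCombination

variable {E : Type*} [SeminormedAddCommGroup E] [NormedSpace ℝ E] {u v : E}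

theorem norm_cosh_smul_add_sinh_smul_le (hu : ‖u‖ ≤ 1) (hv : ‖v‖ ≤ 1) (t : ℝ) :
    ‖cosh t • u + sinh t • v‖ ≤ exp |t| :=
  calc ‖cosh t • u + sinh t • v‖
      ≤ cosh t * ‖u‖ + |sinh t| * ‖v‖ := by
        simpa only [norm_smul, norm_eq_abs, abs_of_pos (cosh_pos t)] using
          norm_add_le (cosh t • u) (sinh t • v)
    _ ≤ cosh t * 1 + |sinh t| * 1 := by gcongr
    _ = exp |t| := by rw [mul_one, mul_one, abs_sinh, ← cosh_abs, cosh_add_sinh]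

theorem exp_neg_abs_le_norm_cosh_smul_add_sinh_smul (hu : 1 ≤ ‖u‖) (hv : ‖v‖ ≤ 1) (t : ℝ) :
    exp (-|t|) ≤ ‖cosh t • u + sinh t • v‖ :=
  calc exp (-|t|) = cosh t * 1 - |sinh t| * 1 := by
        rw [mul_one, mul_one, abs_sinh, ← cosh_abs, cosh_sub_sinh]
    _ ≤ cosh t * ‖u‖ - |sinh t| * ‖v‖ := by gcongr
    _ ≤ ‖cosh t • u + sinh t • v‖ := by
        simpa only [norm_smul, norm_eq_abs, abs_of_pos (cosh_pos t)] using
          norm_sub_le_norm_add (cosh t • u) (sinh t • v)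

theorem norm_cosh_smul_add_sinh_smul_pos (hu : 1 ≤ ‖u‖) (hv : ‖v‖ ≤ 1) (t : ℝ) :
    0 < ‖cosh t • u + sinh t • v‖ :=
  (exp_pos _).trans_le (exp_neg_abs_le_norm_cosh_smul_add_sinh_smul hu hv t)

theorem abs_log_norm_cosh_smul_add_sinh_smul_le (hu : ‖u‖ = 1) (hv : ‖v‖ ≤ 1) (t : ℝ) :
    |log ‖cosh t • u + sinh t • v‖| ≤ |t| := by
  have hpos := norm_cosh_smul_add_sinh_smul_pos hu.ge hv t
  rw [abs_le, le_log_iff_exp_le hpos, log_le_iff_le_exp hpos]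
  exact ⟨exp_neg_abs_le_norm_cosh_smul_add_sinh_smul hu.ge hv t,
    norm_cosh_smul_add_sinh_smul_le hu.le hv t⟩

end HyperbolicCombination

theorem intervalIntegrable_one_sub_sq_rpow {p : ℝ} (hp : -1 < p) :
    IntervalIntegrable (fun r : ℝ ↦ (1 - r ^ 2) ^ p) volume 0 1 := by
  have h_sub : IntervalIntegrable (fun r : ℝ ↦ (1 - r) ^ p) volume 0 1 := by
    simpa using ((intervalIntegral.intervalIntegrable_rpow' (a := 0) (b := 1) hp).comp_sub_left
      1).symm
  have h_add : ContinuousOn (fun r : ℝ ↦ (1 + r) ^ p) (Set.uIcc 0 1) := by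
    refine ContinuousOn.rpow_const (by fun_prop) fun r hr ↦ Or.inl ?_
    rw [Set.uIcc_of_le zero_le_one] at hr
    linarith [hr.1]
  refine (h_sub.mul_continuousOn h_add).congr fun r hr ↦ ?_
  rw [Set.uIoc_of_le zero_le_one] at hr
  change (1 - r) ^ p * (1 + r) ^ p = (1 - r ^ 2) ^ p
  rw [← mul_rpow (by linarith [hr.2]) (by linarith [hr.1])]
  ring_nf

theorem intervalIntegrable_sin_rpow_zero_pi_div_two {p : ℝ} (hp : -1 < p) :
    IntervalIntegrable (fun φ ↦ sin φ ^ p) volume 0 (π / 2) := by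
  rcases le_total 0 p with hp0 | hp0
  · exact (continuous_sin.rpow_const fun _ ↦ Or.inr hp0).intervalIntegrable _ _
  · refine ((intervalIntegral.intervalIntegrable_rpow' hp).const_mul ((2 / π) ^ p)).mono_fun'
      (measurable_sin.pow_const p).aestronglyMeasurable ?_
    rw [Set.uIoc_of_le (by positivity)]
    refine ae_restrict_of_forall_mem measurableSet_Ioc fun φ hφ ↦ ?_
    change ‖sin φ ^ p‖ ≤ (2 / π) ^ p * φ ^ p
    have h_jordan : 2 / π * φ ≤ sin φ := mul_le_sin hφ.1.le hφ.2
    have h_pos : 0 < 2 / π * φ := mul_pos (by positivity) hφ.1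
    rw [norm_of_nonneg (rpow_nonneg (h_pos.le.trans h_jordan) p),
      ← mul_rpow (by positivity) hφ.1.le]
    exact rpow_le_rpow_of_nonpos h_pos h_jordan hp0

theorem intervalIntegrable_sin_rpow {p : ℝ} (hp : -1 < p) :
    IntervalIntegrable (fun φ ↦ sin φ ^ p) volume 0 π := by
  have h_left := intervalIntegrable_sin_rpow_zero_pi_div_two hp
  refine h_left.trans ?_
  simpa [sub_half] using (h_left.comp_sub_left π).symm

/-- The base `cosh² t + 2 r cos φ sinh t cosh t + r² sinh² t` of the spherical-function kernel,
as a function of the polar coordinates `p = (r, φ)` on the half disc. -/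
noncomputable def bcBase (t : ℝ) (p : ℝ × ℝ) : ℝ :=
  cosh t ^ 2 + 2 * p.1 * cos p.2 * sinh t * cosh t + p.1 ^ 2 * sinh t ^ 2

/-- The density of Koornwinder's measure, up to normalization, as a function of the polar
coordinates `p = (r, φ)` on the half disc. -/
noncomputable def bcWeight (k₁ k₂ : ℝ) (p : ℝ × ℝ) : ℝ :=
  (1 - p.1 ^ 2) ^ (k₁ - 1) * p.1 ^ (2 * k₂) * sin p.2 ^ (2 * k₂ - 1)

/-- The coordinate rectangle `0 < r ≤ 1`, `0 < φ ≤ π` of the half disc. It is half-open to match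
the convention for interval integrals. -/
def bcDomain : Set (ℝ × ℝ) := Set.Ioc 0 1 ×ˢ Set.Ioc 0 π

theorem measurableSet_bcDomain : MeasurableSet bcDomain :=
  measurableSet_Ioc.prod measurableSet_Ioc

theorem bcBase_eq_sq_norm (t : ℝ) (p : ℝ × ℝ) :
    bcBase t p = ‖cosh t • (1 : ℂ) + sinh t • (p.1 * Complex.exp (p.2 * Complex.I))‖ ^ 2 := by
  rw [← Complex.normSq_eq_norm_sq, Complex.normSq_apply, bcBase]
  simp only [Complex.real_smul, Complex.add_re, Complex.add_im, Complex.re_ofReal_mul,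
    Complex.im_ofReal_mul, Complex.exp_ofReal_mul_I_re, Complex.exp_ofReal_mul_I_im,
    Complex.one_re, Complex.one_im]
  linear_combination -(p.1 ^ 2 * sinh t ^ 2) * sin_sq_add_cos_sq p.2

theorem norm_ofReal_mul_exp_le_one {p : ℝ × ℝ} (hp : p ∈ bcDomain) :
    ‖(p.1 : ℂ) * Complex.exp (p.2 * Complex.I)‖ ≤ 1 := by
  rw [norm_mul, Complex.norm_exp_ofReal_mul_I, mul_one, Complex.norm_of_nonneg hp.1.1.le]
  exact hp.1.2

theorem bcBase_pos (t : ℝ) {p : ℝ × ℝ} (hp : p ∈ bcDomain) : 0 < bcBase t p := by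
  rw [bcBase_eq_sq_norm]
  exact pow_pos (norm_cosh_smul_add_sinh_smul_pos norm_one.ge (norm_ofReal_mul_exp_le_one hp) t) 2

theorem abs_log_bcBase_le (t : ℝ) {p : ℝ × ℝ} (hp : p ∈ bcDomain) :
    |log (bcBase t p)| ≤ 2 * |t| := by
  rw [bcBase_eq_sq_norm, log_pow, abs_mul, Nat.cast_ofNat, abs_two]
  refine mul_le_mul_of_nonneg_left ?_ zero_le_two
  exact abs_log_norm_cosh_smul_add_sinh_smul_le norm_one (norm_ofReal_mul_exp_le_one hp) t

theorem bcBase_rpow_le_exp_mul (a b t : ℝ) {p : ℝ × ℝ} (hp : p ∈ bcDomain) :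
    bcBase t p ^ a ≤ exp (|a - b| * (2 * |t|)) * bcBase t p ^ b := by
  have hpos := bcBase_pos t hp
  refine (rpow_le_exp_abs_mul_rpow hpos a b).trans ?_
  gcongr
  exact abs_log_bcBase_le t hp

theorem bcWeight_nonneg (k₁ k₂ : ℝ) {p : ℝ × ℝ} (hp : p ∈ bcDomain) : 0 ≤ bcWeight k₁ k₂ p := by
  obtain ⟨⟨hr0, hr1⟩, hφ0, hφπ⟩ := hp
  have h_sub : 0 ≤ 1 - p.1 ^ 2 := sub_nonneg.2 (pow_le_one₀ hr0.le hr1)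
  have h_sin : 0 ≤ sin p.2 := sin_nonneg_of_nonneg_of_le_pi hφ0.le hφπ
  unfold bcWeight
  positivity

section Integrability

variable {k₁ k₂ : ℝ} (hk₁ : 0 < k₁) (hk₂ : 0 < k₂)
include hk₁ hk₂

theorem integrableOn_bcWeight : IntegrableOn (bcWeight k₁ k₂) bcDomain := by
  have h_rpow : Continuous fun r : ℝ ↦ r ^ (2 * k₂) :=
    continuous_id.rpow_const fun _ ↦ Or.inr (by positivity)
  have h_radial := (intervalIntegrable_one_sub_sq_rpow
    (p := k₁ - 1) (by linarith)).mul_continuousOn h_rpow.continuousOn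
  have h_angular := intervalIntegrable_sin_rpow (p := 2 * k₂ - 1) (by linarith)
  rw [intervalIntegrable_iff_integrableOn_Ioc_of_le zero_le_one] at h_radial
  rw [intervalIntegrable_iff_integrableOn_Ioc_of_le pi_pos.le] at h_angular
  rw [IntegrableOn, bcDomain, Measure.volume_eq_prod, ← Measure.prod_restrict]
  exact h_radial.mul_prod h_angular

theorem integrableOn_bcBase_rpow_mul_bcWeight (a t : ℝ) :
    IntegrableOn (fun p ↦ bcBase t p ^ a * bcWeight k₁ k₂ p) bcDomain := by
  have h_meas : Measurable fun p ↦ bcBase t p ^ a := by unfold bcBase; fun_prop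
  refine (integrableOn_bcWeight hk₁ hk₂).bdd_mul (c := exp (|a| * (2 * |t|)))
    h_meas.aestronglyMeasurable (ae_restrict_of_forall_mem measurableSet_bcDomain fun p hp ↦ ?_)
  rw [norm_of_nonneg (rpow_nonneg (bcBase_pos t hp).le a)]
  simpa only [rpow_zero, mul_one, sub_zero] using bcBase_rpow_le_exp_mul a 0 t hp

theorem bcIntegral_eq_setIntegral (l t : ℝ) :
    bcIntegral k₁ k₂ l t =
      ∫ p in bcDomain, bcBase t p ^ ((l - (k₁ + 2 * k₂)) / 2) * bcWeight k₁ k₂ p := by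
  have h_int := integrableOn_bcBase_rpow_mul_bcWeight hk₁ hk₂ ((l - (k₁ + 2 * k₂)) / 2) t
  rw [bcDomain, Measure.volume_eq_prod] at h_int ⊢
  rw [setIntegral_prod _ h_int]
  simp only [bcIntegral, bcBase, bcWeight, intervalIntegral.integral_of_le zero_le_one,
    intervalIntegral.integral_of_le pi_pos.le, mul_assoc]

theorem bcIntegral_le_exp_mul {l m t c : ℝ} (hc : |l - m| * |t| ≤ c) :
    bcIntegral k₁ k₂ l t ≤ exp c * bcIntegral k₁ k₂ m t := by
  rw [bcIntegral_eq_setIntegral hk₁ hk₂, bcIntegral_eq_setIntegral hk₁ hk₂, ← integral_const_mul]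
  refine setIntegral_mono_on (integrableOn_bcBase_rpow_mul_bcWeight hk₁ hk₂ _ t)
    ((integrableOn_bcBase_rpow_mul_bcWeight hk₁ hk₂ _ t).const_mul _) measurableSet_bcDomain
    fun p hp ↦ ?_
  set ρ := k₁ + 2 * k₂
  have h_exponent : |(l - ρ) / 2 - (m - ρ) / 2| * (2 * |t|) = |l - m| * |t| := by
    rw [← sub_div, sub_sub_sub_cancel_right, abs_div, abs_two]
    ring
  calc bcBase t p ^ ((l - ρ) / 2) * bcWeight k₁ k₂ p
      ≤ exp (|l - m| * |t|) * bcBase t p ^ ((m - ρ) / 2) * bcWeight k₁ k₂ p := by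
        rw [← h_exponent]
        exact mul_le_mul_of_nonneg_right (bcBase_rpow_le_exp_mul _ _ t hp)
          (bcWeight_nonneg k₁ k₂ hp)
    _ ≤ exp c * (bcBase t p ^ ((m - ρ) / 2) * bcWeight k₁ k₂ p) := by
        rw [mul_assoc]
        exact mul_le_mul_of_nonneg_right (exp_le_exp.2 hc)
          (mul_nonneg (rpow_nonneg (bcBase_pos t hp).le _) (bcWeight_nonneg k₁ k₂ hp))

end Integrability

theorem stmt_12_general {k₁ k₂ : ℝ} (hk₁ : 0 < k₁) (hk₂ : 0 < k₂) {l m t c : ℝ}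
    (hc : |l - m| * |t| ≤ c) :
    exp (-c) * bcIntegral k₁ k₂ m t ≤ bcIntegral k₁ k₂ l t ∧
      bcIntegral k₁ k₂ l t ≤ exp c * bcIntegral k₁ k₂ m t := by
  refine ⟨?_, bcIntegral_le_exp_mul hk₁ hk₂ hc⟩
  rw [exp_neg, inv_mul_le_iff₀ (exp_pos c)]
  exact bcIntegral_le_exp_mul hk₁ hk₂ (abs_sub_comm l m ▸ hc)

theorem stmt_12 (k₁ k₂ : ℝ) (hk₁ : 0 < k₁) (hk₂ : 0 < k₂) :
    ∀ l t : ℝ, 0 ≤ l → 0 ≤ t → l * t ≤ 1 →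
      Real.exp (-1) * bcIntegral k₁ k₂ 0 t ≤ bcIntegral k₁ k₂ l t ∧
        bcIntegral k₁ k₂ l t ≤ Real.exp 1 * bcIntegral k₁ k₂ 0 t := by
  intro l t hl ht hlt
  exact stmt_12_general hk₁ hk₂ (by rwa [sub_zero, abs_of_nonneg hl, abs_of_nonneg ht])
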